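/- The infimum over all f ∈ K(1/2) and z ∈ 𝔻 \ {0} of Re(e^{iπ/2}·f(z)/z) (equivalently, of −Im(f(z)/z)) equals −π/2; that is, Q_{1/2}(π/2) = −π/2. -/

import Mathlib

/-- The unit disk `{z : ℂ | |z| < 1}`. -/
noncomputable def unitDisk : Set ℂ := Metric.ball 0 1

/-- The extremal convex function of order `α`:
`k_α(z) = ((1-z)^(2α-1) - 1)/(1-2α)` (so that `k_α(0)=0`, `k_α'(0)=1`),
with `k_{1/2}(z) = -log(1-z)` (principal branches). -/
noncomputable def kfun (α : ℝ) (z : ℂ) : ℂ :=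
  if α = 1 / 2 then -Complex.log (1 - z)
  else ((1 - z) ^ ((2 * α - 1 : ℝ) : ℂ) - 1) / ((1 - 2 * α : ℝ) : ℂ)

/-- `h_α(z) = k_α(z)/z` for `z ≠ 0`, `h_α(0) = 1`. -/
noncomputable def hfun (α : ℝ) (z : ℂ) : ℂ :=
  if z = 0 then 1 else kfun α z / z

/-- `f ∈ K(α)`: `f` is analytic on the unit disk, normalized by `f(0)=0`, `f'(0)=1`,
with nonvanishing derivative and `Re(1 + z f''(z)/f'(z)) > α` on the disk. -/
def IsConvexOfOrder (α : ℝ) (f : ℂ → ℂ) : Prop :=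
  DifferentiableOn ℂ f unitDisk ∧ f 0 = 0 ∧ deriv f 0 = 1 ∧
    ∀ z ∈ unitDisk, deriv f z ≠ 0 ∧
      α < (1 + z * deriv (deriv f) z / deriv f z).re

/-!
If `f ∈ K(1/2)`, Jack's lemma applied to `1 - 1 / f'` gives `Re f' > 1/2`, so `q = f' - 1/2` has
positive real part and `q 0 = 1/2`. By the conjugate Poisson formula `Im (q (t z) - q 0)` is the
average of `Im ((ζ + t z) / (ζ - t z)) * Re (q ζ)` over a circle `‖ζ‖ = R`, the weight `Re q` has
average `1/2`, and the integral of the kernel over `t ∈ [0, 1]` is at most `π`. Since `f z / z` is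
the mean of `f'` over the segment from `0` to `z`, this yields `Im (f z / z) ≤ π / 2`. The bound is
approached by `k_{1/2} z = -log (1 - z)` as `z → 1` with `arg (1 - z) → -π / 2`.
-/

open Complex Filter Function Metric Set Topology
open Real (circleAverage)
open MeasureTheory (volume)
open scoped ComplexConjugate Real

section Jack

variable {w : ℂ → ℂ} {w' z₀ : ℂ}

theorem hasDerivAt_norm_sq_comp {c : ℝ → ℂ} {c' : ℂ} {t : ℝ} (hw : HasDerivAt w w' (c t))
    (hc : HasDerivAt c c' t) :
    HasDerivAt (fun s ↦ ‖w (c s)‖ ^ 2) (2 * (c' * w' * conj (w (c t))).re) t :=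
  (hw.scomp t hc).norm_sq.congr_deriv <| by
    simp only [comp_apply, Complex.inner, smul_eq_mul]

theorem im_mul_deriv_mul_conj_eq_zero_of_isMaxOn_sphere (hw : HasDerivAt w w' z₀)
    (hmax : IsMaxOn (norm ∘ w) (sphere 0 ‖z₀‖) z₀) :
    (z₀ * w' * conj (w z₀)).im = 0 := by
  set c : ℝ → ℂ := fun θ ↦ z₀ * exp (θ * I)
  have hc0 : c 0 = z₀ := by simp [c]
  have hc : HasDerivAt c (z₀ * I) 0 := by
    simpa using ((hasDerivAt_id (0 : ℝ)).ofReal_comp.mul_const I).cexp.const_mul z₀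
  have hlocal : IsLocalMax (fun θ ↦ ‖w (c θ)‖ ^ 2) 0 := .of_forall fun θ ↦ by
    have hle : ‖w (c θ)‖ ≤ ‖w z₀‖ := hmax (by simp [c, norm_exp_ofReal_mul_I])
    simpa only [hc0] using pow_le_pow_left₀ (norm_nonneg _) hle 2
  have hzero := hlocal.hasDerivAt_eq_zero (hasDerivAt_norm_sq_comp (hc0.symm ▸ hw) hc)
  rw [hc0, show z₀ * I * w' * conj (w z₀) = I * (z₀ * w' * conj (w z₀)) by ring, I_mul_re] at hzero
  linarith

theorem norm_sq_le_re_mul_deriv_mul_conj (hw : HasDerivAt w w' z₀)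
    (hle : ∀ s ∈ Ioo (0 : ℝ) 1, ‖w (s * z₀)‖ ≤ s * ‖w z₀‖) :
    ‖w z₀‖ ^ 2 ≤ (z₀ * w' * conj (w z₀)).re := by
  set φ : ℝ → ℝ := fun s ↦ ‖w (s * z₀)‖ ^ 2 - s ^ 2 * ‖w z₀‖ ^ 2
  have hφ : HasDerivAt φ (2 * (z₀ * w' * conj (w z₀)).re - 2 * ‖w z₀‖ ^ 2) 1 := by
    have hray : HasDerivAt (fun s : ℝ ↦ (s : ℂ) * z₀) z₀ 1 := by
      simpa using (hasDerivAt_id (1 : ℝ)).ofReal_comp.mul_const z₀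
    have hw1 : HasDerivAt w w' ((1 : ℝ) * z₀) := by simpa using hw
    refine ((hasDerivAt_norm_sq_comp (c := fun s : ℝ ↦ (s : ℂ) * z₀) hw1 hray).fun_sub
      ((hasDerivAt_pow 2 (1 : ℝ)).mul_const (‖w z₀‖ ^ 2))).congr_deriv ?_
    simp only [ofReal_one, one_mul, one_pow, mul_one, Nat.cast_ofNat]
  have hslope : ∀ᶠ s in 𝓝[<] (1 : ℝ), 0 ≤ slope φ 1 s := by
    filter_upwards [Ioo_mem_nhdsLT (zero_lt_one' ℝ)] with s hs
    have hφs : φ s ≤ 0 := by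
      have := pow_le_pow_left₀ (norm_nonneg _) (hle s hs) 2
      rw [mul_pow] at this
      exact sub_nonpos.2 this
    have hφ1 : φ 1 = 0 := by simp [φ]
    rw [slope_def_field, hφ1, sub_zero]
    exact div_nonneg_of_nonpos hφs (sub_nonpos.2 hs.2.le)
  have hnonneg := ge_of_tendsto ((hasDerivAt_iff_tendsto_slope.1 hφ).mono_left
    (nhdsLT_le_nhdsNE 1)) hslope
  linarith

/-- **Jack's lemma**. -/
theorem exists_one_le_mul_deriv_eq_of_isMaxOn (hd : DifferentiableOn ℂ w (ball 0 ‖z₀‖))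
    (hd₀ : DifferentiableAt ℂ w z₀) (h0 : w 0 = 0) (hne : w z₀ ≠ 0)
    (hmax : IsMaxOn (norm ∘ w) (closedBall 0 ‖z₀‖) z₀) :
    ∃ k : ℝ, 1 ≤ k ∧ z₀ * deriv w z₀ = k * w z₀ := by
  have hz₀ : 0 < ‖z₀‖ := norm_pos_iff.2 fun h ↦ hne (h ▸ h0)
  have him := im_mul_deriv_mul_conj_eq_zero_of_isMaxOn_sphere hd₀.hasDerivAt
    (hmax.on_subset sphere_subset_closedBall)
  have hschwarz : ∀ s ∈ Ioo (0 : ℝ) 1, ‖w (s * z₀)‖ ≤ s * ‖w z₀‖ := fun s hs ↦ by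
    have hnorm : ‖(s : ℂ) * z₀‖ = s * ‖z₀‖ := by
      rw [norm_mul, norm_real, Real.norm_of_nonneg hs.1.le]
    have hmaps : MapsTo w (ball 0 ‖z₀‖) (closedBall (w 0) ‖w z₀‖) := fun z hz ↦ by
      rw [h0, mem_closedBall_zero_iff]
      exact hmax (ball_subset_closedBall hz)
    have := dist_le_div_mul_dist_of_mapsTo_ball hd hmaps (z := s * z₀) (by
      rw [mem_ball_zero_iff, hnorm]
      exact mul_lt_of_lt_one_left hz₀ hs.2)
    rw [h0, dist_zero_right, dist_zero_right, hnorm] at this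
    exact this.trans_eq (by field_simp)
  have hre := norm_sq_le_re_mul_deriv_mul_conj hd₀.hasDerivAt hschwarz
  have hw_pos : 0 < ‖w z₀‖ ^ 2 := by positivity
  refine ⟨(z₀ * deriv w z₀ * conj (w z₀)).re / ‖w z₀‖ ^ 2, (one_le_div hw_pos).2 hre, ?_⟩
  have hreal : ((z₀ * deriv w z₀ * conj (w z₀)).re : ℂ) = z₀ * deriv w z₀ * conj (w z₀) :=
    Complex.ext (ofReal_re _) ((ofReal_im _).trans him.symm)
  have hconj : conj (w z₀) ≠ 0 := (map_ne_zero _).2 hne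
  rw [ofReal_div, hreal, ofReal_pow, ← mul_conj']
  field_simp

end Jack

theorem norm_one_sub_inv_lt_one_iff {a : ℂ} (ha : a ≠ 0) : ‖1 - a⁻¹‖ < 1 ↔ 1 / 2 < a.re := by
  have hdiv : 1 - a⁻¹ = (a - 1) / a := by field_simp
  rw [hdiv, norm_div, div_lt_one (norm_pos_iff.2 ha),
    ← sq_lt_sq₀ (norm_nonneg _) (norm_nonneg _), ← normSq_eq_norm_sq, ← normSq_eq_norm_sq,
    normSq_apply, normSq_apply, sub_re, one_re, sub_im, one_im]
  constructor <;> intro <;> linarith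

theorem half_lt_re_of_neg_half_lt_re_mul_deriv_div {g : ℂ → ℂ} {R : ℝ}
    (hg : DifferentiableOn ℂ g (ball 0 R)) (h0 : g 0 = 1) (hne : ∀ z ∈ ball (0 : ℂ) R, g z ≠ 0)
    (h : ∀ z ∈ ball (0 : ℂ) R, -(1 / 2) < (z * deriv g z / g z).re) :
    ∀ z ∈ ball (0 : ℂ) R, 1 / 2 < (g z).re := by
  by_contra! ⟨z₁, hz₁, hre⟩
  set w : ℂ → ℂ := fun z ↦ 1 - (g z)⁻¹ with hw
  have hwd : DifferentiableOn ℂ w (ball 0 R) := (hg.inv hne).const_sub 1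
  have hsub : closedBall (0 : ℂ) ‖z₁‖ ⊆ ball 0 R :=
    closedBall_subset_ball (mem_ball_zero_iff.1 hz₁)
  obtain ⟨z₀, hz₀, hmax⟩ := (isCompact_closedBall (0 : ℂ) ‖z₁‖).exists_isMaxOn
    ⟨z₁, by simp⟩ (hwd.continuousOn.mono hsub).norm
  have hz₀R := hsub hz₀
  have hz₀le : ‖z₀‖ ≤ ‖z₁‖ := mem_closedBall_zero_iff.1 hz₀
  have hw_ge : 1 ≤ ‖w z₀‖ :=
    (not_lt.1 (mt (norm_one_sub_inv_lt_one_iff (hne z₁ hz₁)).1 hre.not_gt)).trans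
      (hmax (by simp : z₁ ∈ closedBall (0 : ℂ) ‖z₁‖))
  obtain ⟨k, hk, hkw⟩ := exists_one_le_mul_deriv_eq_of_isMaxOn
    (hwd.mono (ball_subset_closedBall.trans ((closedBall_subset_closedBall hz₀le).trans hsub)))
    (hwd.differentiableAt (isOpen_ball.mem_nhds hz₀R)) (by simp [hw, h0])
    (norm_pos_iff.1 (zero_lt_one.trans_le hw_ge))
    (hmax.on_subset (closedBall_subset_closedBall hz₀le))
  have hg₀ := hne z₀ hz₀R
  have hgd := (hg.differentiableAt (isOpen_ball.mem_nhds hz₀R)).hasDerivAt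
  have hlog : z₀ * deriv g z₀ / g z₀ = k * (g z₀ - 1) := by
    rw [((hgd.fun_inv hg₀).const_sub 1).deriv] at hkw
    simp only [hw] at hkw
    field_simp at hkw ⊢
    exact hkw
  have hhalf : (g z₀).re ≤ 1 / 2 :=
    not_lt.1 (mt (norm_one_sub_inv_lt_one_iff hg₀).2 hw_ge.not_gt)
  have hgt := h z₀ hz₀R
  rw [hlog, re_ofReal_mul, sub_re, one_re] at hgt
  linarith [mul_nonneg (sub_nonneg.2 hk) (sub_nonneg.2 hhalf)]

section Herglotz

theorem im_mul_inv_one_sub_mul (t : ℝ) (w : ℂ) :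
    (w * (1 - t * w)⁻¹).im = w.im / normSq (1 - t * w) := by
  rw [mul_im, inv_re, inv_im, sub_re, sub_im, one_re, one_im, re_ofReal_mul, im_ofReal_mul]
  ring

theorem sub_ofReal_mul_ne_zero {z ζ : ℂ} (h : ‖z‖ < ‖ζ‖) {t : ℝ} (ht : t ∈ Icc (0 : ℝ) 1) :
    ζ - t * z ≠ 0 := fun h0 ↦ by
  refine h.not_ge ?_
  rw [sub_eq_zero.1 h0, norm_mul, norm_real, Real.norm_of_nonneg ht.1]
  exact mul_le_of_le_one_left (norm_nonneg z) ht.2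

theorem continuousOn_inv_one_sub_mul {w : ℂ} (hw : ‖w‖ < 1) :
    ContinuousOn (fun t : ℝ ↦ (1 - t * w)⁻¹) (uIcc 0 1) :=
  ContinuousOn.inv₀ (by fun_prop) fun t ht ↦
    sub_ofReal_mul_ne_zero (by rwa [norm_one]) (uIcc_of_le (zero_le_one' ℝ) ▸ ht)

theorem integral_im_mul_inv_one_sub_le {w : ℂ} (hw : ‖w‖ < 1) :
    ∫ t in (0 : ℝ)..1, (w * (1 - t * w)⁻¹).im ≤ π / 2 := by
  have hre : 0 < (1 - w).re := by
    rw [sub_re, one_re]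
    linarith [re_le_norm w]
  have hint : IntervalIntegrable (fun t : ℝ ↦ w * (1 - t * w)⁻¹) volume 0 1 :=
    (continuousOn_const.mul (continuousOn_inv_one_sub_mul hw)).intervalIntegrable
  calc ∫ t in (0 : ℝ)..1, (w * (1 - t * w)⁻¹).im
      = (∫ t in (0 : ℝ)..1, w * (1 - t * w)⁻¹).im := intervalIntegral.intervalIntegral_im hint
    _ = arg (1 - w)⁻¹ := by
      rw [intervalIntegral.integral_const_mul, ← log_im, log_inv_eq_integral (.inl hre)]
      simp only [real_smul]
    _ ≤ π / 2 := by
      refine (arg_lt_pi_div_two_iff.2 (.inl ?_)).le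
      rw [inv_re]
      exact div_pos hre (normSq_pos.2 (slitPlane_ne_zero (.inl hre)))

theorem integral_mul_im_mul_inv_one_sub_le {w : ℂ} (hw : ‖w‖ < 1) :
    ∫ t in (0 : ℝ)..1, t * (w * (1 - t * w)⁻¹).im ≤ π / 2 := by
  have hcont : ContinuousOn (fun t : ℝ ↦ (w * (1 - t * w)⁻¹).im) (uIcc 0 1) :=
    continuous_im.comp_continuousOn (continuousOn_const.mul (continuousOn_inv_one_sub_mul hw))
  rcases le_total w.im 0 with him | him
  · refine le_trans ?_ Real.pi_div_two_pos.le
    rw [← neg_nonneg, ← intervalIntegral.integral_neg]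
    refine intervalIntegral.integral_nonneg zero_le_one fun t ht ↦ ?_
    rw [im_mul_inv_one_sub_mul, ← mul_neg, ← neg_div]
    exact mul_nonneg ht.1 (div_nonneg (neg_nonneg.2 him) (normSq_nonneg _))
  · refine le_trans ?_ (integral_im_mul_inv_one_sub_le hw)
    refine intervalIntegral.integral_mono_on zero_le_one
      (continuousOn_id.mul hcont).intervalIntegrable hcont.intervalIntegrable fun t ht ↦ ?_
    refine mul_le_of_le_one_left ?_ ht.2
    rw [im_mul_inv_one_sub_mul]
    exact div_nonneg him (normSq_nonneg _)

theorem integral_im_herglotzRieszKernel_le {z ζ : ℂ} (h : ‖z‖ < ‖ζ‖) :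
    ∫ t in (0 : ℝ)..1, (herglotzRieszKernel 0 (t * z) ζ).im ≤ π := by
  have hζ : ζ ≠ 0 := norm_pos_iff.1 ((norm_nonneg z).trans_lt h)
  have hker : ∀ t ∈ Icc (0 : ℝ) 1, (herglotzRieszKernel 0 (t * z) ζ).im =
      2 * (t * (z / ζ * (1 - t * (z / ζ))⁻¹).im) := fun t ht ↦ by
    have hne := sub_ofReal_mul_ne_zero h ht
    have : 1 - t * (z / ζ) ≠ 0 := by
      rw [← mul_div_assoc, one_sub_div hζ]
      exact div_ne_zero hne hζ
    have heq : herglotzRieszKernel 0 (t * z) ζ =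
        1 + (2 * t : ℝ) * (z / ζ * (1 - t * (z / ζ))⁻¹) := by
      rw [herglotzRieszKernel_def, sub_zero, sub_zero]
      push_cast
      field_simp
      ring
    rw [heq, add_im, one_im, zero_add, im_ofReal_mul, mul_assoc]
  have hw : ‖z / ζ‖ < 1 := by rwa [norm_div, div_lt_one (norm_pos_iff.2 hζ)]
  rw [intervalIntegral.integral_congr fun t ht ↦ hker t (uIcc_of_le (zero_le_one' ℝ) ▸ ht),
    intervalIntegral.integral_const_mul]
  linarith [integral_mul_im_mul_inv_one_sub_le hw]

theorem continuousOn_uncurry_herglotzRieszKernel_mul (z : ℂ) :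
    ContinuousOn (uncurry fun (t : ℝ) ζ ↦ herglotzRieszKernel 0 (t * z) ζ)
      (Icc 0 1 ×ˢ {ζ | ‖z‖ < ‖ζ‖}) := by
  simp only [herglotzRieszKernel_def, sub_zero, uncurry_def]
  exact ContinuousOn.div (by fun_prop) (by fun_prop) fun p hp ↦
    sub_ofReal_mul_ne_zero hp.2 hp.1

theorem integral_pi_sub_im_herglotzRieszKernel_nonneg {z ζ : ℂ} (h : ‖z‖ < ‖ζ‖) :
    0 ≤ ∫ t in (0 : ℝ)..1, (π - (herglotzRieszKernel 0 (t * z) ζ).im) := by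
  have hcont : ContinuousOn (fun t : ℝ ↦ (herglotzRieszKernel 0 (t * z) ζ).im) (uIcc 0 1) := by
    rw [uIcc_of_le zero_le_one]
    exact continuous_im.comp_continuousOn
      ((continuousOn_uncurry_herglotzRieszKernel_mul z).comp (f := fun t ↦ (t, ζ)) (by fun_prop)
        fun t ht ↦ ⟨ht, h⟩)
  rw [intervalIntegral.integral_sub intervalIntegrable_const hcont.intervalIntegrable,
    intervalIntegral.integral_const, sub_zero, one_smul, sub_nonneg]
  exact integral_im_herglotzRieszKernel_le h

theorem intervalIntegral_circleAverage_comm {E : Type*} [NormedAddCommGroup E] [NormedSpace ℝ E]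
    {F : ℝ → ℂ → E} {a b R : ℝ} {c : ℂ}
    (hF : ContinuousOn (uncurry F) (uIcc a b ×ˢ sphere c |R|)) :
    ∫ t in a..b, circleAverage (F t) c R = circleAverage (fun ζ ↦ ∫ t in a..b, F t ζ) c R := by
  have hcont : ContinuousOn (uncurry fun t θ ↦ F t (circleMap c R θ))
      (uIcc a b ×ˢ uIcc 0 (2 * π)) :=
    hF.comp (f := fun p : ℝ × ℝ ↦ (p.1, circleMap c R p.2)) (by fun_prop)
      fun p hp ↦ ⟨hp.1, circleMap_mem_sphere' c R p.2⟩
  simp only [Real.circleAverage_def, intervalIntegral.integral_smul]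
  rw [MeasureTheory.intervalIntegral_intervalIntegral_swap]
  exact (hcont.integrableOn_compact (isCompact_uIcc.prod isCompact_uIcc)).mono_set
    (prod_mono uIoc_subset_uIcc uIoc_subset_uIcc)

variable {q : ℂ → ℂ} {c w z : ℂ} {R : ℝ}

theorem circleAverage_herglotzRieszKernel_smul (hq : DiffContOnCl ℂ q (ball c R))
    (hw : w ∈ ball c R) :
    circleAverage (herglotzRieszKernel c w • q) c R = 2 * q w - q c := by
  have hR : |R| = R := abs_of_pos (pos_of_mem_ball hw)
  rw [← hR] at hq hw
  have hqc : ContinuousOn q (sphere c |R|) := hq.continuousOn_ball.mono sphere_subset_closedBall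
  have hne : ∀ ζ ∈ sphere c |R|, ζ - w ≠ 0 := fun ζ hζ ↦
    sub_ne_zero.2 (sphere_disjoint_ball.ne_of_mem hζ hw)
  have hint : CircleIntegrable (fun ζ ↦ (2 : ℂ) • ((ζ - c) / (ζ - w)) • q ζ) c R := by
    refine ContinuousOn.circleIntegrable' ?_
    fun_prop (disch := assumption)
  rw [← hq.circleAverage_smul_div hw, ← hq.circleAverage, ← smul_eq_mul,
    ← Real.circleAverage_fun_smul, ← Real.circleAverage_sub hint hqc.circleIntegrable']
  refine Real.circleAverage_congr_sphere fun ζ hζ ↦ ?_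
  have := hne ζ hζ
  simp only [herglotzRieszKernel_def, Pi.smul_apply', Pi.sub_apply, smul_eq_mul,
    sub_sub_sub_cancel_right]
  field_simp
  ring

/-- The **conjugate Poisson formula**. -/
theorem circleAverage_im_herglotzRieszKernel_mul_re (hq : DiffContOnCl ℂ q (ball c R))
    (hw : w ∈ ball c R) :
    circleAverage (fun ζ ↦ (herglotzRieszKernel c w ζ).im * (q ζ).re) c R = (q w - q c).im := by
  have hR := pos_of_mem_ball hw
  have hqc : ContinuousOn q (sphere c |R|) := by
    rw [abs_of_pos hR]
    exact hq.continuousOn_ball.mono sphere_subset_closedBall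
  have hH := continuousOn_herglotzRieszKernel_sphere hw
  have hHq : CircleIntegrable (herglotzRieszKernel c w • q) c R :=
    (hH.smul hqc).circleIntegrable'
  have hreHq : CircleIntegrable ((re ∘ herglotzRieszKernel c w) • q) c R :=
    ((continuous_re.comp_continuousOn hH).smul hqc).circleIntegrable'
  calc circleAverage (fun ζ ↦ (herglotzRieszKernel c w ζ).im * (q ζ).re) c R
      = circleAverage
          (imCLM ∘ (herglotzRieszKernel c w • q - (re ∘ herglotzRieszKernel c w) • q)) c R := by
        congr 1
        ext ζ
        simp [mul_im]
    _ = (2 * q w - q c - q w).im := by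
        rw [imCLM.circleAverage_comp_comm (hHq.sub hreHq), Real.circleAverage_sub hHq hreHq,
          circleAverage_herglotzRieszKernel_smul hq hw,
          hq.circleAverage_re_herglotzRieszKernel_smul hw, imCLM_apply]
    _ = (q w - q c).im := by ring_nf

theorem circleAverage_const_sub_im_herglotzRieszKernel_mul_re (hq : DiffContOnCl ℂ q (ball c R))
    (hw : w ∈ ball c R) (a : ℝ) :
    circleAverage (fun ζ ↦ (a - (herglotzRieszKernel c w ζ).im) * (q ζ).re) c R =
      a * (q c).re - (q w - q c).im := by
  have hR : |R| = R := abs_of_pos (pos_of_mem_ball hw)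
  have hqc : ContinuousOn q (sphere c |R|) := by
    rw [hR]
    exact hq.continuousOn_ball.mono sphere_subset_closedBall
  have hqre : ContinuousOn (fun ζ ↦ (q ζ).re) (sphere c |R|) :=
    continuous_re.comp_continuousOn hqc
  have hHim : ContinuousOn (fun ζ ↦ (herglotzRieszKernel c w ζ).im) (sphere c |R|) :=
    continuous_im.comp_continuousOn (continuousOn_herglotzRieszKernel_sphere hw)
  have hmean : circleAverage (fun ζ ↦ (q ζ).re) c R = (q c).re :=
    (reCLM.circleAverage_comp_comm hqc.circleIntegrable').trans
      (congrArg re (hR.symm ▸ hq : DiffContOnCl ℂ q (ball c |R|)).circleAverage)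
  rw [← circleAverage_im_herglotzRieszKernel_mul_re hq hw, ← hmean, ← smul_eq_mul,
    ← Real.circleAverage_smul, ← Real.circleAverage_sub (hqre.const_smul a).circleIntegrable'
      (hHim.fun_mul hqre).circleIntegrable']
  congr 1
  ext ζ
  simp [sub_mul]

theorem ofReal_mul_mem_ball {t : ℝ} (ht : t ∈ Icc (0 : ℝ) 1) (hz : z ∈ ball 0 R) :
    t * z ∈ ball 0 R := by
  simpa only [real_smul] using (convex_ball (0 : ℂ) R).smul_mem_of_zero_mem
    (mem_ball_self (pos_of_mem_ball hz)) hz ht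

theorem integral_im_sub_le_pi_mul_re (hq : DiffContOnCl ℂ q (ball 0 R))
    (hre : ∀ ζ ∈ sphere (0 : ℂ) R, 0 ≤ (q ζ).re) (hz : z ∈ ball 0 R) :
    ∫ t in (0 : ℝ)..1, (q (t * z) - q 0).im ≤ π * (q 0).re := by
  have hR : |R| = R := abs_of_pos (pos_of_mem_ball hz)
  have hI : uIcc (0 : ℝ) 1 = Icc 0 1 := uIcc_of_le zero_le_one
  have hlt : ∀ ζ ∈ sphere (0 : ℂ) |R|, ‖z‖ < ‖ζ‖ := fun ζ hζ ↦ by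
    rw [mem_sphere_zero_iff_norm.1 hζ, hR]
    exact mem_ball_zero_iff.1 hz
  set F : ℝ → ℂ → ℝ := fun t ζ ↦ (π - (herglotzRieszKernel 0 (t * z) ζ).im) * (q ζ).re
  have hF : ContinuousOn (uncurry F) (uIcc 0 1 ×ˢ sphere 0 |R|) := by
    rw [hI]
    refine (continuousOn_const.sub (continuous_im.comp_continuousOn
      ((continuousOn_uncurry_herglotzRieszKernel_mul z).mono (prod_mono_right hlt)))).mul
      ((continuous_re.comp_continuousOn ?_).comp continuousOn_snd fun p hp ↦ hp.2)
    rw [hR]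
    exact hq.continuousOn_ball.mono sphere_subset_closedBall
  have haverage : ∀ t ∈ uIcc (0 : ℝ) 1,
      circleAverage (F t) 0 R = π * (q 0).re - (q (t * z) - q 0).im := fun t ht ↦
    circleAverage_const_sub_im_herglotzRieszKernel_mul_re hq (ofReal_mul_mem_ball (hI ▸ ht) hz) _
  have hnonneg : 0 ≤ circleAverage (fun ζ ↦ ∫ t in (0 : ℝ)..1, F t ζ) 0 R :=
    Real.circleAverage_nonneg_of_nonneg fun ζ hζ ↦ by
      rw [intervalIntegral.integral_mul_const]
      exact mul_nonneg (integral_pi_sub_im_herglotzRieszKernel_nonneg (hlt ζ hζ))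
        (hre ζ (hR ▸ hζ))
  have hint : IntervalIntegrable (fun t : ℝ ↦ (q (t * z) - q 0).im) volume 0 1 := by
    refine ContinuousOn.intervalIntegrable (continuous_im.comp_continuousOn
      (ContinuousOn.sub ?_ continuousOn_const))
    exact hq.differentiableOn.continuousOn.comp (by fun_prop)
      fun t ht ↦ ofReal_mul_mem_ball (hI ▸ ht) hz
  rwa [← intervalIntegral_circleAverage_comm hF, intervalIntegral.integral_congr haverage,
    intervalIntegral.integral_sub intervalIntegrable_const hint,
    intervalIntegral.integral_const, sub_zero, one_smul, sub_nonneg] at hnonneg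

end Herglotz

theorem div_eq_integral_deriv_mul {f : ℂ → ℂ} {R : ℝ} {z : ℂ}
    (hf : DifferentiableOn ℂ f (ball 0 R)) (h0 : f 0 = 0) (hz : z ∈ ball 0 R) (hz0 : z ≠ 0) :
    f z / z = ∫ t in (0 : ℝ)..1, deriv f (t * z) := by
  have hcont : ContinuousOn (fun t : ℝ ↦ deriv f (0 + t • z)) (Icc 0 1) :=
    (hf.deriv isOpen_ball).continuousOn.comp (by fun_prop) fun t ht ↦ by
      simpa using ofReal_mul_mem_ball ht hz
  have hftc := intervalIntegral.integral_unitInterval_deriv_eq_sub hcont fun t ht ↦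
    (hf.differentiableAt (isOpen_ball.mem_nhds
      (by simpa using ofReal_mul_mem_ball ht hz))).hasDerivAt
  rw [div_eq_iff hz0, mul_comm]
  simpa [h0] using hftc.symm

theorem IsConvexOfOrder.half_lt_re_deriv {f : ℂ → ℂ} (hf : IsConvexOfOrder (1 / 2) f) {z : ℂ}
    (hz : z ∈ unitDisk) : 1 / 2 < (deriv f z).re := by
  obtain ⟨hfd, -, hf1, hconv⟩ := hf
  refine half_lt_re_of_neg_half_lt_re_mul_deriv_div (hfd.deriv isOpen_ball) hf1
    (fun w hw ↦ (hconv w hw).1) (fun w hw ↦ ?_) z hz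
  have := (hconv w hw).2
  rw [add_re, one_re] at this
  linarith

theorem IsConvexOfOrder.im_div_le {f : ℂ → ℂ} (hf : IsConvexOfOrder (1 / 2) f) {z : ℂ}
    (hz : z ∈ unitDisk) (hz0 : z ≠ 0) : (f z / z).im ≤ π / 2 := by
  obtain ⟨R, hzR, hR1⟩ := exists_between (mem_ball_zero_iff.1 hz)
  have hsub : closedBall (0 : ℂ) R ⊆ unitDisk := closedBall_subset_ball hR1
  have hd : DifferentiableOn ℂ (deriv f) unitDisk := hf.1.deriv isOpen_ball
  have hq : DiffContOnCl ℂ (fun w ↦ deriv f w - 1 / 2) (ball 0 R) :=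
    ((hd.sub_const _).mono (closure_ball_subset_closedBall.trans hsub)).diffContOnCl
  have hre : ∀ ζ ∈ sphere (0 : ℂ) R, 0 ≤ (deriv f ζ - 1 / 2).re := fun ζ hζ ↦ by
    have := hf.half_lt_re_deriv (hsub (sphere_subset_closedBall hζ))
    rw [sub_re, div_ofNat_re, one_re]
    linarith
  have hint : IntervalIntegrable (fun t : ℝ ↦ deriv f (t * z)) volume 0 1 :=
    ContinuousOn.intervalIntegrable <| hd.continuousOn.comp (by fun_prop) fun t ht ↦
      ofReal_mul_mem_ball (uIcc_of_le (zero_le_one' ℝ) ▸ ht) hz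
  calc (f z / z).im = ∫ t in (0 : ℝ)..1, (deriv f (t * z)).im := by
        rw [div_eq_integral_deriv_mul hf.1 hf.2.1 hz hz0]
        exact (intervalIntegral.intervalIntegral_im hint).symm
    _ = ∫ t in (0 : ℝ)..1, ((deriv f (t * z) - 1 / 2) - (deriv f 0 - 1 / 2)).im := by
        simp only [sub_sub_sub_cancel_right, hf.2.2.1, sub_im, one_im, sub_zero]
    _ ≤ π * (deriv f 0 - 1 / 2).re :=
        integral_im_sub_le_pi_mul_re hq hre (mem_ball_zero_iff.2 hzR)
    _ = π / 2 := by
        rw [hf.2.2.1, sub_re, div_ofNat_re, one_re]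
        ring

theorem one_sub_mem_slitPlane {z : ℂ} (hz : z ∈ unitDisk) : 1 - z ∈ slitPlane := by
  simpa [sub_eq_add_neg] using
    mem_slitPlane_of_norm_lt_one (z := -z) (by simpa using mem_ball_zero_iff.1 hz)

theorem kfun_half : kfun (1 / 2) = fun z ↦ -log (1 - z) := funext fun _ ↦ if_pos rfl

theorem hasDerivAt_kfun (α : ℝ) {z : ℂ} (hz : z ∈ unitDisk) :
    HasDerivAt (kfun α) ((1 - z) ^ ((2 * α - 2 : ℝ) : ℂ)) z := by
  have hslit := one_sub_mem_slitPlane hz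
  have hsub : HasDerivAt (fun z : ℂ ↦ 1 - z) (-1) z := (hasDerivAt_id z).const_sub 1
  rcases eq_or_ne α (1 / 2) with rfl | hα
  · rw [kfun_half]
    refine (hsub.clog hslit).neg.congr_deriv ?_
    rw [show 2 * (1 / 2 : ℝ) - 2 = -1 by norm_num, ofReal_neg, ofReal_one, cpow_neg_one]
    simp [neg_div]
  · have hk : kfun α =
        fun z ↦ ((1 - z) ^ ((2 * α - 1 : ℝ) : ℂ) - 1) / ((1 - 2 * α : ℝ) : ℂ) :=
      funext fun _ ↦ if_neg hα
    have hα' : ((1 - 2 * α : ℝ) : ℂ) ≠ 0 := ofReal_ne_zero.2 fun h ↦ hα (by linarith)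
    rw [hk]
    refine (((hsub.cpow_const hslit).sub_const 1).div_const _).congr_deriv ?_
    rw [show ((2 * α - 1 : ℝ) : ℂ) - 1 = ((2 * α - 2 : ℝ) : ℂ) by push_cast; ring,
      div_eq_iff hα']
    push_cast
    ring

theorem mul_deriv_deriv_kfun_div_deriv (α : ℝ) {z : ℂ} (hz : z ∈ unitDisk) :
    z * deriv (deriv (kfun α)) z / deriv (kfun α) z = (2 - 2 * α : ℝ) * ((1 - z)⁻¹ - 1) := by
  have hslit := one_sub_mem_slitPlane hz
  have hne : 1 - z ≠ 0 := slitPlane_ne_zero hslit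
  have hderiv : deriv (kfun α) =ᶠ[𝓝 z] fun w ↦ (1 - w) ^ ((2 * α - 2 : ℝ) : ℂ) :=
    (isOpen_ball.eventually_mem hz).mono fun w hw ↦ (hasDerivAt_kfun α hw).deriv
  have hsub : HasDerivAt (fun z : ℂ ↦ 1 - z) (-1) z := (hasDerivAt_id z).const_sub 1
  have hpow : (1 - z) ^ ((2 * α - 2 : ℝ) : ℂ) ≠ 0 := fun h ↦ hne ((cpow_eq_zero_iff _ _).1 h).1
  rw [hderiv.deriv_eq, hderiv.eq_of_nhds, (hsub.cpow_const hslit).deriv, cpow_sub _ _ hne, cpow_one,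
    show (1 - z)⁻¹ - 1 = z / (1 - z) by field_simp; ring]
  generalize (1 - z) ^ ((2 * α - 2 : ℝ) : ℂ) = p at hpow
  field_simp
  push_cast
  ring

theorem isConvexOfOrder_kfun {α : ℝ} (hα : α < 1) : IsConvexOfOrder α (kfun α) := by
  refine ⟨fun z hz ↦ (hasDerivAt_kfun α hz).differentiableAt.differentiableWithinAt, ?_, ?_,
    fun z hz ↦ ⟨?_, ?_⟩⟩
  · simp [kfun]
  · simp [(hasDerivAt_kfun α (mem_ball_self one_pos)).deriv]
  · rw [(hasDerivAt_kfun α hz).deriv, Ne, cpow_eq_zero_iff]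
    exact fun h ↦ slitPlane_ne_zero (one_sub_mem_slitPlane hz) h.1
  · have hne := slitPlane_ne_zero (one_sub_mem_slitPlane hz)
    have hre : 1 / 2 < ((1 - z)⁻¹).re := by
      rw [← norm_one_sub_inv_lt_one_iff (inv_ne_zero hne), inv_inv, sub_sub_cancel]
      exact mem_ball_zero_iff.1 hz
    rw [mul_deriv_deriv_kfun_div_deriv α hz, add_re, re_ofReal_mul, sub_re, one_re]
    linarith [mul_pos (sub_pos.2 hα) (sub_pos.2 hre)]

theorem tendsto_mul_log_nhds_zero : Tendsto (fun ζ : ℂ ↦ ζ * log ζ) (𝓝 0) (𝓝 0) := by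
  have hbound : ∀ ζ : ℂ, ‖ζ * log ζ‖ ≤ |‖ζ‖ * Real.log ‖ζ‖| + ‖ζ‖ * π := fun ζ ↦ by
    rw [norm_mul, abs_mul, abs_norm, ← mul_add]
    gcongr
    calc ‖log ζ‖ ≤ |(log ζ).re| + |(log ζ).im| := norm_le_abs_re_add_abs_im _
      _ ≤ |Real.log ‖ζ‖| + π := by
        rw [log_re, log_im]
        gcongr
        exact abs_arg_le_pi ζ
  refine squeeze_zero_norm hbound (Continuous.tendsto' ?_ 0 0 (by simp))
  exact (Real.continuous_mul_log.comp continuous_norm).abs.add (continuous_norm.mul_const _)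

theorem tendsto_im_kfun_half_div {ι : Type*} {l : Filter ι} {z : ι → ℂ} {θ : ℝ}
    (hz : Tendsto z l (𝓝 1)) (harg : Tendsto (fun i ↦ arg (1 - z i)) l (𝓝 θ)) :
    Tendsto (fun i ↦ (kfun (1 / 2) (z i) / z i).im) l (𝓝 (-θ)) := by
  have hsub : Tendsto (fun i ↦ 1 - z i) l (𝓝 0) := by simpa using hz.const_sub 1
  have hrest : Tendsto (fun i ↦ (1 - z i) * log (1 - z i) / z i) l (𝓝 0) := by
    rw [← zero_div (1 : ℂ)]
    exact (tendsto_mul_log_nhds_zero.comp hsub).div hz one_ne_zero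
  rw [← sub_zero (-θ)]
  refine (harg.neg.sub ((continuous_im.tendsto 0).comp hrest)).congr' ?_
  filter_upwards [hz.eventually_ne one_ne_zero] with i hi
  have hdecomp : kfun (1 / 2) (z i) / z i =
      -log (1 - z i) - (1 - z i) * log (1 - z i) / z i := by
    rw [kfun_half]
    field_simp
    ring
  rw [hdecomp, sub_im, neg_im, log_im, comp_apply]

theorem tendsto_arg_ofReal_mul_sub_I :
    Tendsto (fun s : ℝ ↦ arg (s * (s - I))) (𝓝[>] 0) (𝓝 (-(π / 2))) := by
  have hslit : -I ∈ slitPlane := by simp [mem_slitPlane_iff]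
  have hsub : Tendsto (fun s : ℝ ↦ (s : ℂ) - I) (𝓝[>] 0) (𝓝 (-I)) :=
    (Continuous.tendsto' (by fun_prop) 0 _ (by simp)).mono_left nhdsWithin_le_nhds
  rw [← arg_neg_I]
  refine ((continuousAt_arg hslit).tendsto.comp hsub).congr' ?_
  filter_upwards [self_mem_nhdsWithin] with s hs
  exact (arg_real_mul _ hs).symm

theorem one_sub_mul_sub_I_mem_unitDisk {s : ℝ} (hs : s ∈ Ioo (0 : ℝ) 1) :
    1 - s * (s - I) ∈ unitDisk := by
  have hnorm : ‖1 - s * (s - I)‖ ^ 2 = 1 - s ^ 2 * (1 - s ^ 2) := by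
    rw [← normSq_eq_norm_sq, normSq_apply]
    simp only [sub_re, sub_im, one_re, one_im, re_ofReal_mul, im_ofReal_mul, ofReal_re, ofReal_im,
      I_re, I_im]
    ring
  rw [unitDisk, mem_ball_zero_iff, ← sq_lt_one_iff₀ (norm_nonneg _), hnorm]
  exact sub_lt_self 1 (mul_pos (pow_pos hs.1 2) (sub_pos.2 (pow_lt_one₀ hs.1.le hs.2 two_ne_zero)))

theorem tendsto_im_kfun_half_div_one_sub_mul_sub_I :
    Tendsto (fun s : ℝ ↦ (kfun (1 / 2) (1 - s * (s - I)) / (1 - s * (s - I))).im)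
      (𝓝[>] 0) (𝓝 (π / 2)) := by
  have hz : Tendsto (fun s : ℝ ↦ 1 - (s : ℂ) * (s - I)) (𝓝[>] 0) (𝓝 1) :=
    (Continuous.tendsto' (by fun_prop) 0 _ (by simp)).mono_left nhdsWithin_le_nhds
  rw [← neg_neg (π / 2)]
  refine tendsto_im_kfun_half_div hz ?_
  simpa only [sub_sub_cancel] using tendsto_arg_ofReal_mul_sub_I

/-- `Q_{1/2}(π/2) = inf {Re(e^{iπ/2} f(z)/z) : f ∈ K(1/2), z ∈ 𝔻 \ {0}} = -π/2`. -/
theorem Q_half_at_piHalf :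
    sInf {x : ℝ | ∃ f : ℂ → ℂ, IsConvexOfOrder (1 / 2) f ∧
        ∃ z ∈ unitDisk, z ≠ 0 ∧
          x = (Complex.exp (((Real.pi / 2 : ℝ) : ℂ) * Complex.I) * (f z / z)).re}
      = -(Real.pi / 2) := by
  have hre : ∀ a : ℂ, (exp (((π / 2 : ℝ) : ℂ) * I) * a).re = -a.im := fun a ↦ by
    rw [ofReal_div, ofReal_ofNat, exp_pi_div_two_mul_I, I_mul_re]
  simp only [hre]
  set S : Set ℝ := {x | ∃ f, IsConvexOfOrder (1 / 2) f ∧ ∃ z ∈ unitDisk, z ≠ 0 ∧ x = -(f z / z).im}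
  have hlower : -(π / 2) ∈ lowerBounds S := by
    rintro x ⟨f, hf, z, hz, hz0, rfl⟩
    exact neg_le_neg (hf.im_div_le hz hz0)
  have hmem : ∀ᶠ s : ℝ in 𝓝[>] 0,
      -(kfun (1 / 2) (1 - s * (s - I)) / (1 - s * (s - I))).im ∈ S := by
    filter_upwards [Ioo_mem_nhdsGT zero_lt_one] with s hs
    exact ⟨_, isConvexOfOrder_kfun one_half_lt_one, _, one_sub_mul_sub_I_mem_unitDisk hs,
      fun h ↦ hs.1.ne' (by simpa using congrArg im h), rfl⟩
  obtain ⟨s, hs⟩ := hmem.exists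
  exact (isGLB_of_mem_closure hlower (mem_closure_of_tendsto
    tendsto_im_kfun_half_div_one_sub_mul_sub_I.neg hmem)).csInf_eq ⟨_, hs⟩
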